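/- In a symmetric additively-separable hedonic game, if outcome p' is obtained from outcome p by a Nash-feasible deviation of player i to target coalition c, then the total happiness strictly increases; more precisely, Φ₀(p') − Φ₀(p) = 2·(Σ_{j ∈ c} w(i,j) − u_p(i)) > 0. -/

import Mathlib

/-!
By symmetry of the weights, `Φ₀(q) = 2 u_q(i) + R`, where `R` is the total happiness of the other
players among themselves (`totalHappiness_eq_two_mul_add`). A move of `i` leaves `R` unchanged, and
the utility of `i` afterwards is her weight towards the target coalition, so `Φ₀` changes by twice
her gain.
-/

/-!
Partitions of the finite player set `V` are encoded as labellings `p : V → ℕ`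
(fibres are the coalitions).  A deviation of player `i` to the target coalition
labelled `k ≠ p i` (a nonempty fibre is a block of `p` other than `p(i)`, an empty
fibre is the empty target coalition) produces the outcome `Function.update p i k`.
-/

/-- Sum of weights from player `i` to the members of the coalition labelled `k`
(excluding `i` herself); `coalSum w p i (p i)` is the utility of `i` under `p`. -/
def coalSum {V Λ : Type*} [Fintype V] [DecidableEq V] [DecidableEq Λ]
    (w : V → V → ℝ) (p : V → Λ) (i : V) (k : Λ) : ℝ :=
  ∑ j ∈ Finset.univ.filter (fun j => p j = k ∧ j ≠ i), w i j

/-- The total happiness `Φ₀(p) = Σ_i u_p(i)` of an outcome `p`. -/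
def totalHappiness {V : Type*} [Fintype V] [DecidableEq V]
    (w : V → V → ℝ) (p : V → ℕ) : ℝ :=
  ∑ i, coalSum w p i (p i)

/-- Splitting off player `i`: by symmetry every weight `w i b` with `b` in the coalition of `i` is
counted twice, once in the utility of `i` and once in that of `b`. The remaining double sum does
not involve the label `q i`. -/
theorem totalHappiness_eq_two_mul_add {V : Type*} [Fintype V] [DecidableEq V]
    (w : V → V → ℝ) (hsymm : ∀ i j, w i j = w j i) (hzero : ∀ i, w i i = 0)
    (q : V → ℕ) (i : V) :
    totalHappiness w q = 2 * coalSum w q i (q i) +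
      ∑ a ∈ Finset.univ.erase i, ∑ b ∈ Finset.univ.erase i, if q b = q a then w a b else 0 := by
  have hc : ∀ a m, coalSum w q a m = ∑ b, if q b = m then w a b else 0 := by
    intro a m
    rw [coalSum, Finset.sum_filter]
    refine Finset.sum_congr rfl fun b _ => ?_
    by_cases hb : b = a
    · simp [hb, hzero]
    · simp [hb]
  have hrow : ∀ a, coalSum w q a (q a) = (if q i = q a then w a i else 0) +
      ∑ b ∈ Finset.univ.erase i, if q b = q a then w a b else 0 := by
    intro a
    rw [hc, Finset.add_sum_erase _ (fun b => if q b = q a then w a b else 0) (Finset.mem_univ i)]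
  have hcol : ∑ a ∈ Finset.univ.erase i, (if q i = q a then w a i else 0) =
      coalSum w q i (q i) := by
    rw [hrow i]
    simp only [hzero, if_true, zero_add]
    exact Finset.sum_congr rfl fun a _ => by simp only [eq_comm, hsymm a i]
  rw [totalHappiness, ← Finset.add_sum_erase _ _ (Finset.mem_univ i),
    Finset.sum_congr rfl fun a _ => hrow a, Finset.sum_add_distrib, hcol]
  ring

/-- a Nash-feasible deviation of player `i` to a target coalition `k`
increases the total happiness by exactly twice the player's utility gain, and in
particular strictly increases it. -/
theorem nash_deviation_totalHappiness (V : Type*) [Fintype V] [DecidableEq V]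
    (w : V → V → ℝ) (hsymm : ∀ i j, w i j = w j i) (hzero : ∀ i, w i i = 0)
    (p : V → ℕ) (i : V) (k : ℕ) (hk : k ≠ p i)
    (hfeas : coalSum w p i (p i) < coalSum w p i k) :
    totalHappiness w (Function.update p i k) - totalHappiness w p =
        2 * (coalSum w p i k - coalSum w p i (p i)) ∧
      0 < totalHappiness w (Function.update p i k) - totalHappiness w p := by
  have hR : (∑ a ∈ Finset.univ.erase i, ∑ b ∈ Finset.univ.erase i,
      if Function.update p i k b = Function.update p i k a then w a b else 0) =
      ∑ a ∈ Finset.univ.erase i, ∑ b ∈ Finset.univ.erase i, if p b = p a then w a b else 0 :=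
    Finset.sum_congr rfl fun a ha => Finset.sum_congr rfl fun b hb => by
      rw [Function.update_of_ne (Finset.ne_of_mem_erase ha),
        Function.update_of_ne (Finset.ne_of_mem_erase hb)]
  have hu : coalSum w (Function.update p i k) i (Function.update p i k i) = coalSum w p i k := by
    rw [Function.update_self, coalSum, coalSum]
    congr 1
    ext b
    by_cases hb : b = i <;> simp [hb]
  have hgain : totalHappiness w (Function.update p i k) - totalHappiness w p =
      2 * (coalSum w p i k - coalSum w p i (p i)) := by
    rw [totalHappiness_eq_two_mul_add w hsymm hzero (Function.update p i k) i,
      totalHappiness_eq_two_mul_add w hsymm hzero p i, hR, hu]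
    ring
  exact ⟨hgain, by linarith⟩
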